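/- Let β ∈ (0,1), λ ∈ ℂ, c ∈ ℂ, and let φ : [0,∞) → ℂ be continuously differentiable with φ and φ′ bounded. Define u(t) = c E_{β,1}(−λ t^β) + ∫₀^t φ(t−ξ) ξ^{β−1} E_{β,β}(−λ ξ^β) dξ. Then u(0) = c and for every t > 0 the Caputo fractional derivative of order β of u satisfies (1/Γ(1−β)) ∫₀^t u′(τ) (t−τ)^{−β} dτ = −λ u(t) + φ(t). -/

import Mathlib

open scoped Real
open MeasureTheory

/-- Generalized Mittag-Leffler function `E_{α,γ}(z) = ∑ zⁿ / Γ(αn + γ)`. -/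
noncomputable def mittagLeffler (α γ : ℝ) (z : ℂ) : ℂ :=
  ∑' n : ℕ, z ^ n / (Real.Gamma (α * n + γ) : ℂ)

/-!
Write `g_a` for the Riemann–Liouville kernel, `K_γ(t) = t^(γ-1) E_{β,γ}(-λ t^β)` on `(0, ∞)` and
`f = φ'`. The semigroup law `g_a ⋆ g_b = g_{a+b}` and the expansion `K_γ = ∑ (-λ)ⁿ g_{βn+γ}` give
`K_γ ⋆ g_a = K_{γ+a}` and `g_1 = K_1 + λ K_{β+1}`. On `(0, ∞)` one has `φ = (φ(0) δ₀ + f) ⋆ g_1`, so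
`u = c K_1 + (φ(0) δ₀ + f) ⋆ K_{β+1} = c + ∫₀ᵗ v` with `v = ((φ(0) - λ c) δ₀ + f) ⋆ K_β`. Hence
`u' = v` almost everywhere, and the Caputo derivative of `u` is
`v ⋆ g_{1-β} = ((φ(0) - λ c) δ₀ + f) ⋆ K_1 = φ - λ u`.
-/

section

open Set Function Filter ContinuousLinearMap
open scoped Convolution

theorem rpow_mul_exp_neg_le_Gamma {M s : ℝ} (hM : 0 < M) (hs : 1 ≤ s) :
    M ^ (s - 1) * Real.exp (-M) ≤ Real.Gamma s := by
  have hs₀ : 0 < s := one_pos.trans_le hs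
  have hsub : Ioi M ⊆ Ioi 0 := Ioi_subset_Ioi hM.le
  have hint := Real.GammaIntegral_convergent hs₀
  calc M ^ (s - 1) * Real.exp (-M)
      = ∫ x in Ioi M, Real.exp (-x) * M ^ (s - 1) := by
        rw [integral_mul_const, integral_exp_neg_Ioi, mul_comm]
    _ ≤ ∫ x in Ioi M, Real.exp (-x) * x ^ (s - 1) := by
        refine setIntegral_mono_on ((integrableOn_exp_neg_Ioi M).mul_const _)
          (hint.mono_set hsub) measurableSet_Ioi fun x (hx : M < x) => ?_
        gcongr
    _ ≤ ∫ x in Ioi 0, Real.exp (-x) * x ^ (s - 1) := by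
        refine setIntegral_mono_set hint ?_ hsub.eventuallyLE
        filter_upwards [ae_restrict_mem measurableSet_Ioi] with x (hx : 0 < x)
        exact mul_nonneg (Real.exp_nonneg _) (Real.rpow_nonneg hx.le _)
    _ = Real.Gamma s := (Real.Gamma_eq_integral hs₀).symm

theorem summable_norm_pow_div_Gamma {α : ℝ} (hα : 0 < α) (γ : ℝ) (z : ℂ) :
    Summable fun n : ℕ => ‖z ^ n / (Real.Gamma (α * n + γ) : ℂ)‖ := by
  set b : ℝ := 2 * ‖z‖ + 1
  have hb : 0 < b := by positivity
  set M : ℝ := b ^ (1 / α) with hM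
  have hM₀ : 0 < M := Real.rpow_pos_of_pos hb _
  have hMpow (n : ℕ) : M ^ (α * n + γ - 1) = b ^ n * M ^ (γ - 1) := by
    rw [add_sub_assoc, Real.rpow_add hM₀, hM, ← Real.rpow_mul hb.le, ← mul_assoc,
      one_div_mul_cancel hα.ne', one_mul, Real.rpow_natCast]
  have hgeom : Summable fun n : ℕ => (M ^ (γ - 1) * Real.exp (-M))⁻¹ * (‖z‖ / b) ^ n := by
    refine (summable_geometric_of_lt_one (by positivity) ?_).mul_left _
    rw [div_lt_one hb]
    linarith [norm_nonneg z]
  refine hgeom.of_norm_bounded_eventually_nat ?_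
  filter_upwards [(tendsto_natCast_atTop_atTop (R := ℝ)).const_mul_atTop hα
    |>.eventually_ge_atTop (1 - γ)] with n hn
  have hs : 1 ≤ α * n + γ := by linarith
  have hΓ : b ^ n * M ^ (γ - 1) * Real.exp (-M) ≤ Real.Gamma (α * n + γ) :=
    hMpow n ▸ rpow_mul_exp_neg_le_Gamma hM₀ hs
  rw [norm_norm, norm_div, norm_pow, Complex.norm_real,
    Real.norm_of_nonneg (Real.Gamma_nonneg_of_nonneg (by linarith))]
  calc ‖z‖ ^ n / Real.Gamma (α * n + γ)
      ≤ ‖z‖ ^ n / (b ^ n * M ^ (γ - 1) * Real.exp (-M)) := by gcongr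
    _ = (M ^ (γ - 1) * Real.exp (-M))⁻¹ * (‖z‖ / b) ^ n := by
      rw [div_pow, mul_assoc, div_mul_eq_div_div, div_eq_inv_mul]

theorem hasSum_mittagLeffler {α : ℝ} (hα : 0 < α) (γ : ℝ) (z : ℂ) :
    HasSum (fun n : ℕ => z ^ n / (Real.Gamma (α * n + γ) : ℂ)) (mittagLeffler α γ z) :=
  (summable_norm_pow_div_Gamma hα γ z).of_norm.hasSum

theorem mittagLeffler_zero (α γ : ℝ) : mittagLeffler α γ 0 = 1 / (Real.Gamma γ : ℂ) := by
  rw [mittagLeffler, tsum_eq_single 0 fun n hn => by rw [zero_pow hn, zero_div]]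
  simp

theorem continuous_mittagLeffler {α : ℝ} (hα : 0 < α) (γ : ℝ) :
    Continuous (mittagLeffler α γ) := by
  refine continuous_iff_continuousAt.2 fun z => ?_
  set R : ℝ := ‖z‖ + 1
  have hball : ContinuousOn (mittagLeffler α γ) (Metric.ball 0 R) := by
    refine continuousOn_tsum (fun n => by fun_prop)
      (summable_norm_pow_div_Gamma hα γ (R : ℂ)) fun n w hw => ?_
    have hwR : ‖w‖ ≤ ‖(R : ℂ)‖ := by
      rw [Complex.norm_real]
      exact (mem_ball_zero_iff.1 hw).le.trans (le_abs_self R)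
    rw [norm_div, norm_div, norm_pow, norm_pow]
    gcongr
  exact hball.continuousAt (Metric.isOpen_ball.mem_nhds (by simp [R]))

section Convolution

variable {𝕜 : Type*} [RCLike 𝕜]

theorem indicator_convolution_indicator (f g : ℝ → 𝕜) :
    (Ioi 0).indicator f ⋆[mul 𝕜 𝕜] (Ioi 0).indicator g =
      (Ioi 0).indicator fun t => ∫ s in (0 : ℝ)..t, f s * g (t - s) :=
  (posConvolution_eq_convolution_indicator f g (mul ℝ 𝕜) volume).symm

theorem mul_convolution_comm (f g : ℝ → 𝕜) : f ⋆[mul 𝕜 𝕜] g = g ⋆[mul 𝕜 𝕜] f := by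
  rw [← convolution_flip, flip_mul]

variable {f g h : ℝ → 𝕜} {t : ℝ}

theorem convolutionExists_const_smul_left (hfg : ConvolutionExists f g (mul 𝕜 𝕜)) (c : 𝕜) :
    ConvolutionExists (c • f) g (mul 𝕜 𝕜) := fun t => by
  simpa only [ConvolutionExistsAt, Pi.smul_apply, mul_apply', smul_eq_mul, mul_assoc]
    using (hfg t).integrable.const_mul c

theorem convolutionExists_const_smul_right (hfg : ConvolutionExists f g (mul 𝕜 𝕜)) (c : 𝕜) :
    ConvolutionExists f (c • g) (mul 𝕜 𝕜) := fun t => by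
  simpa only [ConvolutionExistsAt, Pi.smul_apply, mul_apply', smul_eq_mul, mul_left_comm]
    using (hfg t).integrable.const_mul c

theorem convolutionExistsAt_convolution_left
    (hfgh : Integrable fun p : ℝ × ℝ => f p.2 * g (p.1 - p.2) * h (t - p.1)) :
    ConvolutionExistsAt (f ⋆[mul 𝕜 𝕜] g) h t (mul 𝕜 𝕜) := by
  simpa only [ConvolutionExistsAt, convolution_def, mul_apply', ← integral_mul_const]
    using hfgh.integral_prod_left

theorem integral_convolution_integrand (f g h : ℝ → 𝕜) (t y : ℝ) :
    ∫ x, f y * g (x - y) * h (t - x) = f y * (g ⋆[mul 𝕜 𝕜] h) (t - y) := by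
  have hshift := integral_sub_right_eq_self (μ := volume) (fun x => g x * h (t - y - x)) y
  simp only [sub_sub_sub_cancel_right] at hshift
  simp only [convolution_def, mul_apply', mul_assoc, integral_const_mul, hshift]

theorem convolutionExistsAt_convolution_right
    (hfgh : Integrable fun p : ℝ × ℝ => f p.2 * g (p.1 - p.2) * h (t - p.1)) :
    ConvolutionExistsAt f (g ⋆[mul 𝕜 𝕜] h) t (mul 𝕜 𝕜) := by
  simpa only [ConvolutionExistsAt, mul_apply', integral_convolution_integrand]
    using hfgh.integral_prod_right

theorem convolution_assoc_of_integrable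
    (hfgh : Integrable fun p : ℝ × ℝ => f p.2 * g (p.1 - p.2) * h (t - p.1)) :
    ((f ⋆[mul 𝕜 𝕜] g) ⋆[mul 𝕜 𝕜] h) t = (f ⋆[mul 𝕜 𝕜] (g ⋆[mul 𝕜 𝕜] h)) t :=
  calc ((f ⋆[mul 𝕜 𝕜] g) ⋆[mul 𝕜 𝕜] h) t
      = ∫ x, ∫ y, f y * g (x - y) * h (t - x) := by
        simp only [convolution_def, mul_apply', integral_mul_const]
    _ = ∫ y, ∫ x, f y * g (x - y) * h (t - x) := integral_integral_swap hfgh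
    _ = (f ⋆[mul 𝕜 𝕜] (g ⋆[mul 𝕜 𝕜] h)) t := by
        simp only [integral_convolution_integrand]
        rfl

end Convolution

section RLKernel

/-- The Riemann–Liouville kernel `t₊^(a - 1) / Γ(a)`, vanishing on `(-∞, 0]`: convolution with it
is fractional integration of order `a`, and `a = 1 - β` gives the kernel of the Caputo derivative
of order `β`. -/
noncomputable def rlKernel (𝕜 : Type*) [RCLike 𝕜] (a : ℝ) : ℝ → 𝕜 :=
  (Ioi 0).indicator fun t => ((t ^ (a - 1) / Real.Gamma a : ℝ) : 𝕜)

variable {𝕜 : Type*} [RCLike 𝕜] {a b : ℝ}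

theorem rlKernel_of_nonpos {t : ℝ} (ht : t ≤ 0) : rlKernel 𝕜 a t = 0 :=
  indicator_of_notMem (notMem_Ioi.2 ht) _

theorem rlKernel_of_pos {t : ℝ} (ht : 0 < t) :
    rlKernel 𝕜 a t = ((t ^ (a - 1) / Real.Gamma a : ℝ) : 𝕜) :=
  indicator_of_mem (mem_Ioi.2 ht) _

theorem ofReal_rlKernel (a t : ℝ) : ((rlKernel ℝ a t : ℝ) : 𝕜) = rlKernel 𝕜 a t := by
  obtain ht | ht := le_or_gt t 0
  · simp [rlKernel_of_nonpos ht]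
  · simp [rlKernel_of_pos ht]

theorem rlKernel_nonneg (ha : 0 < a) (t : ℝ) : 0 ≤ rlKernel ℝ a t :=
  indicator_nonneg (fun _ hs => div_nonneg (Real.rpow_nonneg (le_of_lt hs) _)
    (Real.Gamma_pos_of_pos ha).le) t

theorem norm_rlKernel (ha : 0 < a) (t : ℝ) : ‖rlKernel 𝕜 a t‖ = rlKernel ℝ a t := by
  rw [← ofReal_rlKernel, RCLike.norm_ofReal, abs_of_nonneg (rlKernel_nonneg ha t)]

theorem rlKernel_one : rlKernel 𝕜 1 = (Ioi 0).indicator 1 := by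
  ext t
  simp [rlKernel, indicator_apply]

theorem measurable_rlKernel (a : ℝ) : Measurable (rlKernel 𝕜 a) :=
  (RCLike.measurable_ofReal.comp (by fun_prop)).indicator measurableSet_Ioi

theorem rlKernel_le (ha : 1 ≤ a) {s t : ℝ} (ht : 0 ≤ t) (hst : s ≤ t) :
    rlKernel ℝ a s ≤ t ^ (a - 1) / Real.Gamma a := by
  have := Real.Gamma_nonneg_of_nonneg (zero_le_one.trans ha)
  obtain hs | hs := le_or_gt s 0
  · rw [rlKernel_of_nonpos hs]
    positivity
  · rw [rlKernel_of_pos hs]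
    change s ^ (a - 1) / Real.Gamma a ≤ _
    gcongr

theorem integral_rpow_mul_sub_rpow {p q t : ℝ} (hp : 0 < p) (hq : 0 < q) (ht : 0 < t) :
    ∫ s in (0 : ℝ)..t, s ^ (p - 1) * (t - s) ^ (q - 1) =
      t ^ (p + q - 1) * (Real.Gamma p * Real.Gamma q / Real.Gamma (p + q)) := by
  have hbeta := Complex.betaIntegral_scaled p q ht
  rw [Complex.betaIntegral_eq_Gamma_mul_div p q (by simpa) (by simpa)] at hbeta
  apply Complex.ofReal_injective
  rw [← intervalIntegral.integral_ofReal]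
  push_cast [Complex.ofReal_cpow ht.le, ← Complex.Gamma_ofReal] at hbeta ⊢
  rw [← hbeta]
  refine intervalIntegral.integral_congr fun s hs => ?_
  rw [uIcc_of_le ht.le] at hs
  push_cast [Complex.ofReal_cpow hs.1, Complex.ofReal_cpow (sub_nonneg.2 hs.2)]
  rfl

theorem rlKernel_convolution_rlKernel (ha : 0 < a) (hb : 0 < b) :
    rlKernel 𝕜 a ⋆[mul 𝕜 𝕜] rlKernel 𝕜 b = rlKernel 𝕜 (a + b) := by
  rw [rlKernel, rlKernel, indicator_convolution_indicator]
  refine indicator_congr fun t (ht : 0 < t) => ?_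
  have hΓa := (Real.Gamma_pos_of_pos ha).ne'
  have hΓb := (Real.Gamma_pos_of_pos hb).ne'
  simp only [← RCLike.ofReal_mul, RCLike.intervalIntegral_ofReal, div_mul_div_comm,
    intervalIntegral.integral_div, integral_rpow_mul_sub_rpow ha hb ht]
  congr 1
  field_simp

-- A divergent Bochner integral would be `0`, whereas the semigroup law gives a positive value.
theorem convolutionExists_rlKernel (ha : 0 < a) (hb : 0 < b) :
    ConvolutionExists (rlKernel 𝕜 a) (rlKernel 𝕜 b) (mul 𝕜 𝕜) := by
  intro t
  obtain ht | ht := le_or_gt t 0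
  · have hzero (s : ℝ) : rlKernel 𝕜 a s * rlKernel 𝕜 b (t - s) = 0 := by
      obtain hs | hs := le_or_gt s 0
      · rw [rlKernel_of_nonpos hs, zero_mul]
      · rw [rlKernel_of_nonpos (by linarith : t - s ≤ 0), mul_zero]
    simp [ConvolutionExistsAt, hzero]
  · refine not_imp_comm.1 integral_undef (ne_of_eq_of_ne
      (congrFun (rlKernel_convolution_rlKernel ha hb) t) ?_)
    rw [rlKernel_of_pos ht, RCLike.ofReal_ne_zero]
    exact (div_pos (Real.rpow_pos_of_pos ht _) (Real.Gamma_pos_of_pos (add_pos ha hb))).ne'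

end RLKernel

section Domination

variable {𝕜 : Type*} [RCLike 𝕜]

/-- `g` is measurable and, on every half-line `(-∞, T]`, bounded by a multiple of the
Riemann–Liouville kernel of order `a`; in particular it vanishes on `(-∞, 0]`. For positive
orders such functions have everywhere convergent convolutions. -/
structure RLDominated (a : ℝ) (g : ℝ → 𝕜) : Prop where
  aestronglyMeasurable : AEStronglyMeasurable g
  exists_norm_le : ∀ T : ℝ, ∃ M : ℝ, ∀ s ≤ T, ‖g s‖ ≤ M * rlKernel ℝ a s

theorem rlDominated_rlKernel {a : ℝ} (ha : 0 < a) : RLDominated a (rlKernel 𝕜 a) where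
  aestronglyMeasurable := (measurable_rlKernel a).aestronglyMeasurable
  exists_norm_le _ := ⟨1, fun s _ => by rw [one_mul, norm_rlKernel ha]⟩

namespace RLDominated

variable {a b : ℝ} {f g h : ℝ → 𝕜}

theorem eq_zero_of_nonpos (hg : RLDominated a g) {s : ℝ} (hs : s ≤ 0) : g s = 0 := by
  obtain ⟨M, hM⟩ := hg.exists_norm_le 0
  simpa [rlKernel_of_nonpos hs] using hM s hs

theorem exists_norm_mul_le (hg : RLDominated a g) (hh : RLDominated b h) (T : ℝ) :
    ∃ M : ℝ, ∀ s ≤ T, ∀ x,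
      ‖g x * h (s - x)‖ ≤ M * (rlKernel ℝ a x * rlKernel ℝ b (s - x)) := by
  obtain ⟨M, hM⟩ := hg.exists_norm_le T
  obtain ⟨N, hN⟩ := hh.exists_norm_le T
  refine ⟨M * N, fun s hs x => ?_⟩
  obtain hx | hx := le_or_gt x 0
  · simp [hg.eq_zero_of_nonpos hx, rlKernel_of_nonpos hx]
  obtain hsx | hsx := le_or_gt s x
  · simp [hh.eq_zero_of_nonpos (sub_nonpos.2 hsx), rlKernel_of_nonpos (sub_nonpos.2 hsx)]
  have hgx := hM x (hsx.le.trans hs)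
  rw [norm_mul, mul_mul_mul_comm]
  exact mul_le_mul hgx (hN _ (by linarith)) (norm_nonneg _) ((norm_nonneg _).trans hgx)

theorem convolutionExists (hg : RLDominated a g) (hh : RLDominated b h) (ha : 0 < a)
    (hb : 0 < b) : ConvolutionExists g h (mul 𝕜 𝕜) := by
  intro s
  obtain ⟨M, hM⟩ := hg.exists_norm_mul_le hh s
  exact ((convolutionExists_rlKernel (𝕜 := ℝ) ha hb s).const_mul M).mono'
    (hg.aestronglyMeasurable.convolution_integrand_snd (mul 𝕜 𝕜) hh.aestronglyMeasurable s)
    (.of_forall (hM s le_rfl))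

theorem exists_integral_norm_mul_le (hg : RLDominated a g) (hh : RLDominated b h) (ha : 0 < a)
    (hb : 0 < b) (T : ℝ) :
    ∃ M : ℝ, ∀ s ≤ T, ∫ x, ‖g x * h (s - x)‖ ≤ M * rlKernel ℝ (a + b) s := by
  obtain ⟨M, hM⟩ := hg.exists_norm_mul_le hh T
  refine ⟨M, fun s hs => ?_⟩
  calc ∫ x, ‖g x * h (s - x)‖
      ≤ ∫ x, M * (rlKernel ℝ a x * rlKernel ℝ b (s - x)) :=
        integral_mono (hg.convolutionExists hh ha hb s).norm
          ((convolutionExists_rlKernel ha hb s).const_mul M) (hM s hs)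
    _ = M * rlKernel ℝ (a + b) s := by
        rw [integral_const_mul, ← rlKernel_convolution_rlKernel ha hb]
        rfl

theorem exists_integral_norm_mul_le_const (hg : RLDominated a g) (hh : RLDominated b h)
    (ha : 0 < a) (hb : 0 < b) (hab : 1 ≤ a + b) (T : ℝ) :
    ∃ C : ℝ, ∀ s ≤ T, ∫ x, ‖g x * h (s - x)‖ ≤ C := by
  obtain ⟨M, hM⟩ := hg.exists_integral_norm_mul_le hh ha hb T
  refine ⟨|M| * (|T| ^ (a + b - 1) / Real.Gamma (a + b)), fun s hs => (hM s hs).trans ?_⟩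
  exact mul_le_mul (le_abs_self M) (rlKernel_le hab (abs_nonneg T) (hs.trans (le_abs_self T)))
    (rlKernel_nonneg (add_pos ha hb) s) (abs_nonneg M)

theorem integrable_mul_mul (hf : LocallyIntegrable f) (hf₀ : support f ⊆ Ioi 0)
    (hg : RLDominated a g) (hh : RLDominated b h) (ha : 0 < a) (hb : 0 < b) (hab : 1 ≤ a + b)
    (t : ℝ) : Integrable fun p : ℝ × ℝ => f p.2 * g (p.1 - p.2) * h (t - p.1) := by
  have hmeas : AEStronglyMeasurable fun p : ℝ × ℝ => f p.2 * g (p.1 - p.2) * h (t - p.1) :=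
    (hf.aestronglyMeasurable.convolution_integrand (mul 𝕜 𝕜) hg.aestronglyMeasurable).mul
      (hh.aestronglyMeasurable.comp_quasiMeasurePreserving
        (quasiMeasurePreserving_sub_left volume t)).comp_fst
  have hnorm (y : ℝ) : ∫ x, ‖f y * g (x - y) * h (t - x)‖ =
      ‖f y‖ * ∫ x, ‖g x * h (t - y - x)‖ := by
    simpa only [norm_mul, convolution_def, mul_apply'] using
      integral_convolution_integrand (fun x => ‖f x‖) (fun x => ‖g x‖) (fun x => ‖h x‖) t y
  obtain ⟨C, hC⟩ := hg.exists_integral_norm_mul_le_const hh ha hb hab t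
  refine (integrable_prod_iff' hmeas).2 ⟨.of_forall fun y => ?_, ?_⟩
  · simpa only [mul_apply', sub_sub_sub_cancel_right, mul_assoc] using
      ((hg.convolutionExists hh ha hb (t - y)).integrable.comp_sub_right y).const_mul (f y)
  · have hft : IntegrableOn f (Ioc 0 t) :=
      (hf.integrableOn_isCompact isCompact_Icc).mono_set Ioc_subset_Icc_self
    refine ((hft.integrable_indicator measurableSet_Ioc).norm.mul_const C).mono'
      hmeas.norm.prod_swap.integral_prod_right' (.of_forall fun y => ?_)
    change ‖∫ x, ‖f y * g (x - y) * h (t - x)‖‖ ≤ ‖(Ioc 0 t).indicator f y‖ * C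
    rw [hnorm, Real.norm_of_nonneg (by positivity)]
    by_cases hy : y ∈ Ioc 0 t
    · rw [indicator_of_mem hy]
      gcongr
      exact hC _ (sub_le_self t hy.1.le)
    · rw [indicator_of_notMem hy, norm_zero, zero_mul]
      obtain hy₀ | hty : y ≤ 0 ∨ t < y := by simpa [← not_lt, imp_iff_not_or] using hy
      · simp [notMem_support.1 fun hmem => (hf₀ hmem).not_ge hy₀]
      · have hzero (x : ℝ) : g x * h (t - y - x) = 0 := by
          obtain hx | hx := le_or_gt x 0
          · rw [hg.eq_zero_of_nonpos hx, zero_mul]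
          · rw [hh.eq_zero_of_nonpos (by linarith), mul_zero]
        simp [hzero]

end RLDominated
end Domination

section MLKernel

/-- The relaxation kernel `t₊^(γ - 1) E_{β,γ}(-λ t^β)`, vanishing on `(-∞, 0]`. -/
noncomputable def mlKernel (β γ : ℝ) (lam : ℂ) : ℝ → ℂ :=
  (Ioi 0).indicator fun t => ((t ^ (γ - 1) : ℝ) : ℂ) * mittagLeffler β γ (-lam * ((t ^ β : ℝ) : ℂ))

variable {β γ a : ℝ}

theorem hasSum_mlKernel (hβ : 0 < β) (γ : ℝ) (lam : ℂ) (s : ℝ) :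
    HasSum (fun n : ℕ => (-lam) ^ n * rlKernel ℂ (β * n + γ) s) (mlKernel β γ lam s) := by
  obtain hs | hs := le_or_gt s 0
  · simp [mlKernel, rlKernel_of_nonpos hs, hs.not_gt, hasSum_zero]
  have hterm (n : ℕ) : (-lam) ^ n * rlKernel ℂ (β * n + γ) s = ((s ^ (γ - 1) : ℝ) : ℂ) *
      ((-lam * ((s ^ β : ℝ) : ℂ)) ^ n / (Real.Gamma (β * n + γ) : ℂ)) := by
    rw [rlKernel_of_pos hs, add_sub_assoc, Real.rpow_add hs, Real.rpow_mul hs.le,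
      Real.rpow_natCast]
    push_cast [RCLike.ofReal_eq_complex_ofReal]
    ring
  rw [mlKernel, indicator_of_mem (mem_Ioi.2 hs)]
  simpa only [hterm] using (hasSum_mittagLeffler hβ γ _).mul_left _

theorem mlKernel_add_smul_mlKernel (hβ : 0 < β) (γ : ℝ) (lam : ℂ) :
    mlKernel β γ lam + lam • mlKernel β (β + γ) lam = rlKernel ℂ γ := by
  ext s
  have hterm (n : ℕ) : (-lam) ^ (n + 1) * rlKernel ℂ (β * (n + 1 : ℕ) + γ) s =
      -lam * ((-lam) ^ n * rlKernel ℂ (β * n + (β + γ)) s) := by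
    rw [pow_succ', mul_assoc, Nat.cast_succ, mul_add_one, add_assoc]
  have htail : HasSum (fun n : ℕ => -lam * ((-lam) ^ n * rlKernel ℂ (β * n + (β + γ)) s))
      (mlKernel β γ lam s - rlKernel ℂ γ s) := by
    simpa only [hterm, Finset.sum_range_one, pow_zero, one_mul, Nat.cast_zero, mul_zero, zero_add]
      using (hasSum_nat_add_iff' 1).2 (hasSum_mlKernel hβ γ lam s)
  have heq := htail.unique ((hasSum_mlKernel hβ (β + γ) lam s).mul_left (-lam))
  rw [Pi.add_apply, Pi.smul_apply, smul_eq_mul]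
  linear_combination heq

theorem rlDominated_mlKernel (hβ : 0 < β) (hγ : 0 < γ) (lam : ℂ) :
    RLDominated γ (mlKernel β γ lam) where
  aestronglyMeasurable := by
    have := (continuous_mittagLeffler hβ γ).measurable
    exact Measurable.aestronglyMeasurable
      (Measurable.indicator (by fun_prop) measurableSet_Ioi)
  exists_norm_le T := by
    have hcont : Continuous fun s : ℝ => mittagLeffler β γ (-lam * ((s ^ β : ℝ) : ℂ)) :=
      (continuous_mittagLeffler hβ γ).comp (continuous_const.mul
        (Complex.continuous_ofReal.comp (Real.continuous_rpow_const hβ.le)))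
    obtain ⟨B, hB⟩ := isCompact_Icc.exists_bound_of_continuousOn (s := Icc 0 T) hcont.continuousOn
    refine ⟨Real.Gamma γ * B, fun s hs => ?_⟩
    obtain hs₀ | hs₀ := le_or_gt s 0
    · simp [mlKernel, rlKernel_of_nonpos hs₀, hs₀.not_gt]
    rw [mlKernel, indicator_of_mem (mem_Ioi.2 hs₀), rlKernel_of_pos hs₀, norm_mul,
      Complex.norm_real, Real.norm_of_nonneg (Real.rpow_nonneg hs₀.le _)]
    calc s ^ (γ - 1) * ‖mittagLeffler β γ (-lam * ((s ^ β : ℝ) : ℂ))‖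
        ≤ s ^ (γ - 1) * B := by gcongr; exact hB s ⟨hs₀.le, hs⟩
      _ = Real.Gamma γ * B * (s ^ (γ - 1) / Real.Gamma γ) := by
        have := (Real.Gamma_pos_of_pos hγ).ne'
        field_simp

theorem mlKernel_convolution_rlKernel (hβ : 0 < β) (hγ : 0 < γ) (ha : 0 < a) (lam : ℂ) :
    mlKernel β γ lam ⋆[mul ℂ ℂ] rlKernel ℂ a = mlKernel β (γ + a) lam := by
  ext t
  set F : ℕ → ℝ → ℂ := fun n x =>
    (-lam) ^ n * (rlKernel ℂ (β * n + γ) x * rlKernel ℂ a (t - x)) with hF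
  have hpos (n : ℕ) : 0 < β * n + γ := by positivity
  have hint (n : ℕ) : Integrable (F n) :=
    (convolutionExists_rlKernel (hpos n) ha t).integrable.const_mul _
  have hvalue (n : ℕ) : ∫ x, F n x = (-lam) ^ n * rlKernel ℂ (β * n + (γ + a)) t := by
    rw [integral_const_mul, ← add_assoc, ← rlKernel_convolution_rlKernel (hpos n) ha]
    rfl
  have hnorm (n : ℕ) : ∫ x, ‖F n x‖ = ‖(-lam) ^ n * rlKernel ℂ (β * n + (γ + a)) t‖ := by
    simp only [hF, norm_mul, norm_rlKernel (hpos n), norm_rlKernel ha, integral_const_mul]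
    rw [← add_assoc, norm_rlKernel (add_pos (hpos n) ha),
      ← rlKernel_convolution_rlKernel (hpos n) ha]
    rfl
  have hsum (x : ℝ) : ∑' n, F n x = mlKernel β γ lam x * rlKernel ℂ a (t - x) := by
    simpa only [mul_assoc] using ((hasSum_mlKernel hβ γ lam x).mul_right _).tsum_eq
  have htotal := hasSum_mlKernel hβ (γ + a) lam t
  have hswap := hasSum_integral_of_summable_integral_norm hint
    (by simpa only [hnorm] using htotal.summable.norm)
  simp only [hvalue, hsum] at hswap
  exact hswap.unique htotal

end MLKernel

section Causal

variable {𝕜 : Type*} [RCLike 𝕜] {a : ℝ} {f g : ℝ → 𝕜}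

theorem locallyIntegrable_of_convolutionExists_rlKernel_one
    (hf : ConvolutionExists f (rlKernel 𝕜 1) (mul 𝕜 𝕜)) : LocallyIntegrable f := by
  intro x
  refine ⟨Iio (x + 1), Iio_mem_nhds (lt_add_one x), ?_⟩
  rw [← integrable_indicator_iff measurableSet_Iio]
  refine (hf (x + 1)).integrable.congr (.of_forall fun y => ?_)
  simp [rlKernel_one, indicator_apply]

theorem RLDominated.locallyIntegrable_convolution (hf : LocallyIntegrable f)
    (hf₀ : support f ⊆ Ioi 0) (hg : RLDominated a g) (ha : 0 < a) :
    LocallyIntegrable (f ⋆[mul 𝕜 𝕜] g) :=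
  locallyIntegrable_of_convolutionExists_rlKernel_one fun t =>
    convolutionExistsAt_convolution_left <|
      hg.integrable_mul_mul hf hf₀ (rlDominated_rlKernel one_pos) ha one_pos (by linarith) t

theorem RLDominated.locallyIntegrable (hg : RLDominated a g) (ha : 0 < a) :
    LocallyIntegrable g :=
  locallyIntegrable_of_convolutionExists_rlKernel_one
    (hg.convolutionExists (rlDominated_rlKernel one_pos) ha one_pos)

theorem RLDominated.support_subset (hg : RLDominated a g) : support g ⊆ Ioi 0 :=
  fun _ hs => not_le.1 fun hs₀ => hs (hg.eq_zero_of_nonpos hs₀)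

theorem support_convolution_subset_Ioi (hf₀ : support f ⊆ Ioi 0) (hg₀ : support g ⊆ Ioi 0) :
    support (f ⋆[mul 𝕜 𝕜] g) ⊆ Ioi 0 := by
  rw [← indicator_eq_self.2 hf₀, ← indicator_eq_self.2 hg₀, indicator_convolution_indicator]
  exact support_indicator_subset

end Causal

section ImpulseConvolution

variable {𝕜 : Type*} [RCLike 𝕜] {a b : ℝ} {c : 𝕜} {f g h : ℝ → 𝕜}

/-- The convolution of `g` with the measure `c δ₀ + f(s) ds`. For `g = rlKernel 𝕜 1` it is the
primitive of `f` with initial value `c`, restricted to `(0, ∞)`. -/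
noncomputable def impulseConvolution (c : 𝕜) (f g : ℝ → 𝕜) : ℝ → 𝕜 :=
  c • g + f ⋆[mul 𝕜 𝕜] g

theorem impulseConvolution_add (hfg : ConvolutionExists f g (mul 𝕜 𝕜))
    (hfh : ConvolutionExists f h (mul 𝕜 𝕜)) :
    impulseConvolution c f (g + h) = impulseConvolution c f g + impulseConvolution c f h := by
  rw [impulseConvolution, hfg.distrib_add hfh, smul_add, add_add_add_comm]
  rfl

theorem impulseConvolution_smul (l : 𝕜) :
    impulseConvolution c f (l • g) = l • impulseConvolution c f g := by
  rw [impulseConvolution, convolution_smul, smul_comm, ← smul_add]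
  rfl

theorem sub_impulseConvolution (c' : 𝕜) :
    impulseConvolution (c - c') f g = impulseConvolution c f g - c' • g := by
  rw [impulseConvolution, impulseConvolution, sub_smul, sub_add_eq_add_sub]

theorem impulseConvolution_rlKernel_one (c : 𝕜) (f : ℝ → 𝕜) :
    impulseConvolution c ((Ioi 0).indicator f) (rlKernel 𝕜 1) =
      (Ioi 0).indicator fun t => c + ∫ s in (0 : ℝ)..t, f s := by
  rw [impulseConvolution, rlKernel_one, indicator_convolution_indicator]
  ext t
  by_cases ht : t ∈ Ioi 0 <;> simp [ht]

namespace RLDominated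

theorem support_impulseConvolution_subset (hg : RLDominated a g) (c : 𝕜)
    (hf₀ : support f ⊆ Ioi 0) : support (impulseConvolution c f g) ⊆ Ioi 0 :=
  (support_add _ _).trans <| union_subset ((support_const_smul_subset c g).trans hg.support_subset)
    (support_convolution_subset_Ioi hf₀ hg.support_subset)

theorem impulseConvolution_convolution (hf : LocallyIntegrable f) (hf₀ : support f ⊆ Ioi 0)
    (hg : RLDominated a g) (hh : RLDominated b h) (ha : 0 < a) (hb : 0 < b) (hab : 1 ≤ a + b)
    (c : 𝕜) : impulseConvolution c f g ⋆[mul 𝕜 𝕜] h = impulseConvolution c f (g ⋆[mul 𝕜 𝕜] h) := by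
  ext t
  have hfgh := hg.integrable_mul_mul hf hf₀ hh ha hb hab t
  have hcgh := convolutionExists_const_smul_left (hg.convolutionExists hh ha hb) c t
  rw [impulseConvolution, hcgh.add_distrib (convolutionExistsAt_convolution_left hfgh),
    smul_convolution, convolution_assoc_of_integrable hfgh]
  rfl

theorem locallyIntegrable_impulseConvolution (hf : LocallyIntegrable f) (hf₀ : support f ⊆ Ioi 0)
    (hg : RLDominated a g) (ha : 0 < a) (c : 𝕜) :
    LocallyIntegrable (impulseConvolution c f g) :=
  ((hg.locallyIntegrable ha).smul c).add (hg.locallyIntegrable_convolution hf hf₀ ha)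

end RLDominated
end ImpulseConvolution

section Relaxation

variable {β γ : ℝ} {f : ℝ → ℂ}

theorem convolutionExists_mlKernel (hβ : 0 < β) (hγ : 1 ≤ γ) (lam : ℂ)
    (hf : LocallyIntegrable f) (hf₀ : support f ⊆ Ioi 0) :
    ConvolutionExists f (mlKernel β γ lam) (mul ℂ ℂ) := by
  intro t
  have hγ₂ : 0 < γ / 2 := by linarith
  rw [← add_halves γ, ← mlKernel_convolution_rlKernel hβ hγ₂ hγ₂]
  exact convolutionExistsAt_convolution_right <|
    (rlDominated_mlKernel hβ hγ₂ lam).integrable_mul_mul hf hf₀ (rlDominated_rlKernel hγ₂)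
      hγ₂ hγ₂ (by linarith) t

theorem impulseConvolution_rlKernel_one_eq (hβ : 0 < β) (lam b : ℂ)
    (hf : LocallyIntegrable f) (hf₀ : support f ⊆ Ioi 0) :
    impulseConvolution b f (rlKernel ℂ 1) =
      impulseConvolution b f (mlKernel β 1 lam) +
        lam • impulseConvolution b f (mlKernel β (β + 1) lam) := by
  rw [← mlKernel_add_smul_mlKernel hβ 1 lam, impulseConvolution_add
    (convolutionExists_mlKernel hβ le_rfl lam hf hf₀) (convolutionExists_const_smul_right
      (convolutionExists_mlKernel hβ (by linarith) lam hf hf₀) lam), impulseConvolution_smul]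

theorem indicator_mittagLeffler_add_integral (β : ℝ) (lam c : ℂ) (φ : ℝ → ℂ) :
    ((Ioi 0).indicator fun t : ℝ => c * mittagLeffler β 1 (-lam * ((t ^ β : ℝ) : ℂ)) +
      ∫ ξ in (0 : ℝ)..t, φ (t - ξ) * ((ξ ^ (β - 1) : ℝ) : ℂ) *
        mittagLeffler β β (-lam * ((ξ ^ β : ℝ) : ℂ))) =
      c • mlKernel β 1 lam + (Ioi 0).indicator φ ⋆[mul ℂ ℂ] mlKernel β β lam := by
  rw [mul_convolution_comm, mlKernel, mlKernel, indicator_convolution_indicator]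
  ext t
  by_cases ht : t ∈ Ioi 0
  · simp [ht, mul_comm, mul_left_comm]
  · simp [ht]

theorem smul_mlKernel_add_impulseConvolution (hβ : 0 < β) (lam b c : ℂ)
    (hf : LocallyIntegrable f) (hf₀ : support f ⊆ Ioi 0) :
    c • mlKernel β 1 lam + impulseConvolution b f (rlKernel ℂ 1) ⋆[mul ℂ ℂ] mlKernel β β lam =
      impulseConvolution c (impulseConvolution (b - lam * c) f (mlKernel β β lam))
        (rlKernel ℂ 1) := by
  have hK := rlDominated_mlKernel hβ hβ lam
  have hg := rlDominated_rlKernel (𝕜 := ℂ) one_pos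
  have hβ₁ : 1 ≤ β + 1 := by linarith
  change _ = c • rlKernel ℂ 1 + impulseConvolution _ _ _ ⋆[mul ℂ ℂ] _
  rw [hK.impulseConvolution_convolution hf hf₀ hg hβ one_pos hβ₁,
    hg.impulseConvolution_convolution hf hf₀ hK one_pos hβ (by linarith),
    mul_convolution_comm (rlKernel ℂ 1), mlKernel_convolution_rlKernel hβ hβ one_pos,
    sub_impulseConvolution, ← mlKernel_add_smul_mlKernel hβ 1 lam]
  module

theorem impulseConvolution_mlKernel_convolution_rlKernel (hβ : β ∈ Ioo (0 : ℝ) 1) (lam b c : ℂ)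
    (hf : LocallyIntegrable f) (hf₀ : support f ⊆ Ioi 0) :
    impulseConvolution (b - lam * c) f (mlKernel β β lam) ⋆[mul ℂ ℂ] rlKernel ℂ (1 - β) =
      impulseConvolution b f (rlKernel ℂ 1) - lam • (c • mlKernel β 1 lam +
        impulseConvolution b f (rlKernel ℂ 1) ⋆[mul ℂ ℂ] mlKernel β β lam) := by
  have hβ' : 0 < 1 - β := sub_pos.2 hβ.2
  have hK := rlDominated_mlKernel hβ.1 hβ.1 lam
  rw [hK.impulseConvolution_convolution hf hf₀ (rlDominated_rlKernel hβ') hβ.1 hβ' (by simp),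
    mlKernel_convolution_rlKernel hβ.1 hβ.1 hβ', add_sub_cancel, sub_impulseConvolution,
    (rlDominated_rlKernel one_pos).impulseConvolution_convolution hf hf₀ hK one_pos hβ.1
      (by linarith [hβ.1]),
    mul_convolution_comm (rlKernel ℂ 1), mlKernel_convolution_rlKernel hβ.1 hβ.1 one_pos,
    impulseConvolution_rlKernel_one_eq hβ.1 lam b hf hf₀]
  module

end Relaxation

section Caputo

variable {β : ℝ} {c : ℂ} {u v : ℝ → ℂ}

/-- The Caputo derivative `(1/Γ(1-β)) ∫₀ᵗ u'(τ) (t-τ)^(-β) dτ` of order `β ∈ (0, 1)`. -/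
noncomputable def caputoDeriv (β : ℝ) (u : ℝ → ℂ) (t : ℝ) : ℂ :=
  (1 / (Real.Gamma (1 - β) : ℂ)) *
    ∫ τ in (0 : ℝ)..t, deriv u τ * (((t - τ) ^ (-β) : ℝ) : ℂ)

theorem indicator_deriv_ae_eq (hv : LocallyIntegrable v) (hv₀ : support v ⊆ Ioi 0)
    (hu : ∀ t > 0, u t = c + ∫ s in (0 : ℝ)..t, v s) :
    (Ioi 0).indicator (deriv u) =ᵐ[volume] v := by
  filter_upwards [LocallyIntegrable.ae_hasDerivAt_integral hv] with t ht
  by_cases ht₀ : t ∈ Ioi 0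
  · rw [indicator_of_mem ht₀]
    exact (((ht 0).const_add c).congr_of_eventuallyEq
      ((eventually_gt_nhds ht₀).mono hu)).deriv
  · rw [indicator_of_notMem ht₀, notMem_support.1 fun hmem => ht₀ (hv₀ hmem)]

theorem indicator_caputoDeriv (hv : LocallyIntegrable v) (hv₀ : support v ⊆ Ioi 0)
    (hu : ∀ t > 0, u t = c + ∫ s in (0 : ℝ)..t, v s) :
    (Ioi 0).indicator (caputoDeriv β u) = v ⋆[mul ℂ ℂ] rlKernel ℂ (1 - β) := by
  rw [← convolution_congr _ (indicator_deriv_ae_eq hv hv₀ hu) .rfl, rlKernel,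
    indicator_convolution_indicator]
  refine indicator_congr fun t _ => ?_
  rw [caputoDeriv, ← intervalIntegral.integral_const_mul]
  refine intervalIntegral.integral_congr fun τ _ => ?_
  simp only [sub_sub_cancel_left]
  push_cast [RCLike.ofReal_eq_complex_ofReal]
  ring

end Caputo

theorem locallyIntegrable_indicator_Ioi {f : ℝ → ℂ} (hf : LocallyIntegrableOn f (Ici 0)) :
    LocallyIntegrable ((Ioi 0).indicator f) := by
  refine locallyIntegrable_iff.2 fun K hK => ?_
  rw [integrableOn_indicator_iff measurableSet_Ioi]
  exact (hf.integrableOn_compact_subset inter_subset_left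
    (hK.inter_left isClosed_Ici)).mono_set (inter_subset_inter_left _ Ioi_subset_Ici_self)

theorem caputo_solution_with_source_general {β : ℝ} (hβ : β ∈ Ioo (0 : ℝ) 1) (lam c : ℂ)
    {φ f : ℝ → ℂ} (hf : LocallyIntegrableOn f (Ici 0))
    (hφ : ∀ t, 0 ≤ t → φ t = φ 0 + ∫ s in (0 : ℝ)..t, f s) {u : ℝ → ℂ}
    (hu : ∀ t, 0 ≤ t → u t =
      c * mittagLeffler β 1 (-lam * ((t ^ β : ℝ) : ℂ)) +
      ∫ ξ in (0 : ℝ)..t, φ (t - ξ) * ((ξ ^ (β - 1) : ℝ) : ℂ) *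
        mittagLeffler β β (-lam * ((ξ ^ β : ℝ) : ℂ))) :
    u 0 = c ∧ ∀ t, 0 < t → caputoDeriv β u t = -lam * u t + φ t := by
  refine ⟨by simpa [hβ.1.ne', mittagLeffler_zero] using hu 0 le_rfl, fun t ht => ?_⟩
  set f₀ := (Ioi 0).indicator f
  have hf₀ : support f₀ ⊆ Ioi 0 := support_indicator_subset
  have hf₀' : LocallyIntegrable f₀ := locallyIntegrable_indicator_Ioi hf
  set v := impulseConvolution (φ 0 - lam * c) f₀ (mlKernel β β lam)
  have hK := rlDominated_mlKernel hβ.1 hβ.1 lam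
  have hv : LocallyIntegrable v := hK.locallyIntegrable_impulseConvolution hf₀' hf₀ hβ.1 _
  have hv₀ : support v ⊆ Ioi 0 := hK.support_impulseConvolution_subset _ hf₀
  have hφ_eq : (Ioi 0).indicator φ = impulseConvolution (φ 0) f₀ (rlKernel ℂ 1) := by
    rw [impulseConvolution_rlKernel_one]
    exact indicator_congr fun s hs => hφ s (le_of_lt hs)
  have hu_eq : (Ioi 0).indicator u = c • mlKernel β 1 lam +
      impulseConvolution (φ 0) f₀ (rlKernel ℂ 1) ⋆[mul ℂ ℂ] mlKernel β β lam := by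
    rw [← hφ_eq, ← indicator_mittagLeffler_add_integral]
    exact indicator_congr fun s hs => hu s (le_of_lt hs)
  have huv : (Ioi 0).indicator u = (Ioi 0).indicator fun s => c + ∫ x in (0 : ℝ)..s, v x := by
    rw [hu_eq, smul_mlKernel_add_impulseConvolution hβ.1 lam _ c hf₀' hf₀,
      ← impulseConvolution_rlKernel_one, indicator_eq_self.2 hv₀]
  have hcaputo : (Ioi 0).indicator (caputoDeriv β u) =
      (Ioi 0).indicator φ - lam • (Ioi 0).indicator u := by
    have huv_pos (s : ℝ) (hs : s > 0) : u s = c + ∫ x in (0 : ℝ)..s, v x := by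
      simpa [hs] using congrFun huv s
    rw [indicator_caputoDeriv hv hv₀ huv_pos, hφ_eq, hu_eq,
      impulseConvolution_mlKernel_convolution_rlKernel hβ lam _ c hf₀' hf₀]
  simpa [ht, sub_eq_neg_add] using congrFun hcaputo t

end

/-- Single-Fourier-mode form of the unified fractional reaction-diffusion equation:
for `β ∈ (0,1)` and `φ` continuously differentiable with `φ` and `φ′` bounded, the
function `u(t) = c E_{β,1}(-λ t^β) + ∫₀^t φ(t-ξ) ξ^{β-1} E_{β,β}(-λ ξ^β) dξ` satisfies
`u(0) = c` and `(1/Γ(1-β)) ∫₀^t u′(τ)(t-τ)^{-β} dτ = -λ u(t) + φ(t)` for `t > 0`. -/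
theorem caputo_solution_with_source (β : ℝ) (hβ : β ∈ Set.Ioo (0 : ℝ) 1)
    (lam c : ℂ) (φ : ℝ → ℂ) (hφ : ContDiff ℝ 1 φ)
    (hφb : ∃ C : ℝ, ∀ t ≥ (0 : ℝ), ‖φ t‖ ≤ C)
    (hφ'b : ∃ C : ℝ, ∀ t ≥ (0 : ℝ), ‖deriv φ t‖ ≤ C)
    (u : ℝ → ℂ)
    (hu : ∀ t : ℝ, u t =
      c * mittagLeffler β 1 (-lam * ((t ^ β : ℝ) : ℂ)) +
      ∫ ξ in (0 : ℝ)..t, φ (t - ξ) * ((ξ ^ (β - 1) : ℝ) : ℂ) *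
        mittagLeffler β β (-lam * ((ξ ^ β : ℝ) : ℂ))) :
    u 0 = c ∧
      ∀ t : ℝ, 0 < t →
        (1 / (Real.Gamma (1 - β) : ℂ)) *
            ∫ τ in (0 : ℝ)..t, deriv u τ * (((t - τ) ^ (-β) : ℝ) : ℂ) =
          -lam * u t + φ t := by
  have hφ' := hφ.continuous_deriv le_rfl
  refine caputo_solution_with_source_general hβ lam c (hφ'.locallyIntegrable.locallyIntegrableOn _)
    (fun t _ => ?_) fun t _ => hu t
  rw [intervalIntegral.integral_deriv_eq_sub (fun _ _ => hφ.differentiable one_ne_zero _)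
    (hφ'.intervalIntegrable _ _), add_sub_cancel]
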